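/- arXiv:1811.08658 — 2 statements merged into one kernel-verified Lean document; each statement's English description precedes it below -/
import Mathlib

section
/- Let n ≥ 1 and let f : ℝⁿ_{>0} → ℝⁿ_{>0} be an order-preserving homogeneous map. Then the set E(f) := {x ∈ ℝⁿ_{>0} : ∃ λ > 0, f(x) = λx} of positive eigenvectors of f is nonempty and bounded with respect to Hilbert's metric d_H if and only if for every nonempty proper subset J of {1,…,n} there exists x ∈ ℝⁿ_{>0} such that max_{j∈J} f(x)_j / x_j < min_{j∈Jᶜ} f(x)_j / x_j. -/
/-- The variation seminorm `max_i x_i - min_i x_i` on `ℝⁿ` (a norm on `V0`). -/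
noncomputable def vnorm (n : ℕ) (x : Fin n → ℝ) : ℝ := (⨆ i, x i) - (⨅ i, x i)

/-- The norm `‖x‖_H = max(max_i x_i, 0) - min(min_i x_i, 0)` on `ℝᵐ`. -/
noncomputable def Hnorm (m : ℕ) (x : Fin m → ℝ) : ℝ :=
  max (⨆ i, x i) 0 - min (⨅ i, x i) 0

/-- Hilbert's (projective) metric on the open positive cone. -/
noncomputable def dH (n : ℕ) (x y : Fin n → ℝ) : ℝ :=
  Real.log (⨆ i, x i / y i) - Real.log (⨅ i, x i / y i)

/-- `V0 = {x ∈ ℝⁿ : x_n = 0}` (the last coordinate vanishes). -/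
def V0 (n : ℕ) : Set (Fin n → ℝ) := {x | ∀ i : Fin n, (i : ℕ) = n - 1 → x i = 0}

/-- `v` illuminates `z` (a point of the unit sphere of the norm `nrm`). -/
def illum (m : ℕ) (nrm : (Fin m → ℝ) → ℝ) (v z : Fin m → ℝ) : Prop :=
  ∃ ε > 0, ∀ l : ℝ, 0 < l → l < ε → nrm (z + l • v) < 1

open Filter Topology

section Additive

variable {ι : Type*} [Fintype ι] [Nonempty ι]

lemma aux_nonexp (T : (ι → ℝ) → (ι → ℝ)) (hm : ∀ x y, x ≤ y → T x ≤ T y)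
    (ha : ∀ x (c : ℝ) i, T (fun k => x k + c) i = T x i + c) (x y : ι → ℝ) :
    dist (T x) (T y) ≤ dist x y := by
  have key : ∀ x y : ι → ℝ, ∀ i, T x i - T y i ≤ dist x y := by
    intro x y i
    have h1 : x ≤ fun k => y k + dist x y := by
      intro k
      have := (le_abs_self _).trans ((Real.dist_eq (x k) (y k)).symm.le.trans (dist_le_pi_dist x y k))
      show x k ≤ y k + dist x y
      linarith
    have h2 := hm _ _ h1 i
    rw [ha] at h2
    linarith
  rw [dist_pi_le_iff dist_nonneg]
  intro i
  rw [Real.dist_eq, abs_sub_le_iff]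
  refine ⟨key x y i, ?_⟩
  rw [dist_comm]
  exact key y x i

lemma aux_solve (T : (ι → ℝ) → (ι → ℝ)) (hT : ∀ x y, dist (T x) (T y) ≤ dist x y)
    (δ : ℝ) (hδ : 0 < δ) (w : ι → ℝ) : ∃ y, ∀ i, T y i - y i = δ * (y i - w i) := by
  have hpos : 0 < 1 + δ := by linarith
  let F : (ι → ℝ) → (ι → ℝ) := fun y => (1 + δ)⁻¹ • (T y + δ • w)
  have hlt : (1 + δ)⁻¹ < 1 := inv_lt_one_of_one_lt₀ (by linarith)
  have hF : ContractingWith (Real.toNNReal (1 + δ)⁻¹) F := by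
    constructor
    · rw [← NNReal.coe_lt_coe, Real.coe_toNNReal _ (by positivity)]
      simpa using hlt
    · apply LipschitzWith.of_dist_le_mul
      intro x y
      rw [Real.coe_toNNReal _ (by positivity)]
      simp only [F]
      rw [dist_smul₀, dist_add_right, Real.norm_of_nonneg (by positivity)]
      exact mul_le_mul_of_nonneg_left (hT x y) (by positivity)
  have hfix : F (ContractingWith.fixedPoint F hF) = ContractingWith.fixedPoint F hF :=
    hF.fixedPoint_isFixedPt
  refine ⟨ContractingWith.fixedPoint F hF, fun i => ?_⟩
  have := congrFun hfix i
  simp only [F, Pi.smul_apply, Pi.add_apply, smul_eq_mul] at this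
  rw [inv_mul_eq_iff_eq_mul₀ hpos.ne'] at this
  linarith

lemma aux_gap (T : (ι → ℝ) → (ι → ℝ)) (hm : ∀ x y, x ≤ y → T x ≤ T y)
    (ha : ∀ x (c : ℝ) i, T (fun k => x k + c) i = T x i + c)
    (J : Finset ι) (hJ : J.Nonempty) (hJc : ∃ j, j ∉ J) (x : ι → ℝ)
    (hx : ∀ i ∈ J, ∀ j, j ∉ J → T x i - x i < T x j - x j) (y : ι → ℝ) (δ l : ℝ) (hδ : 0 ≤ δ)
    (hy : ∀ i, T y i = y i + δ * y i + l) :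
    ∃ i ∈ J, ∃ j, j ∉ J ∧ y i - y j ≤ 2 * ‖x‖ := by
  by_contra! hcon
  obtain ⟨i0, hi0⟩ := hJ
  obtain ⟨j0, hj0⟩ := hJc
  have hxb : ∀ i j, x i - x j ≤ 2 * ‖x‖ := by
    intro i j
    have h1 := norm_le_pi_norm x i
    have h2 := norm_le_pi_norm x j
    rw [Real.norm_eq_abs] at h1 h2
    have := abs_le.1 h1
    have := abs_le.1 h2
    linarith
  obtain ⟨i, hi⟩ := Finite.exists_max (fun k => y k - x k)
  obtain ⟨j, hj⟩ := Finite.exists_min (fun k => y k - x k)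
  have hiJ : i ∈ J := by
    by_contra h
    have h1 := hcon i0 hi0 i h
    have h2 := hi i0
    have h3 := hxb i0 i
    linarith
  have hjJ : j ∉ J := by
    intro h
    have h1 := hcon j h j0 hj0
    have h2 := hj j0
    have h3 := hxb j j0
    linarith
  have h1 : T y i ≤ T x i + (y i - x i) := by
    rw [← ha]
    refine hm _ _ (fun k => ?_) i
    have := hi k
    show y k ≤ x k + (y i - x i)
    linarith
  have h2 : T x j + (y j - x j) ≤ T y j := by
    rw [← ha]
    refine hm _ _ (fun k => ?_) j
    have := hj k
    show x k + (y j - x j) ≤ y k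
    linarith
  rw [hy] at h1 h2
  have h3 := hx i hiJ j hjJ
  have h4 := hcon i hiJ j hjJ
  have h5 : 0 ≤ y i - y j := by
    have := norm_nonneg x
    linarith
  nlinarith [mul_nonneg hδ h5]

lemma aux_bdd (T : (ι → ℝ) → (ι → ℝ)) (hm : ∀ x y, x ≤ y → T x ≤ T y)
    (ha : ∀ x (c : ℝ) i, T (fun k => x k + c) i = T x i + c)
    (H : ∀ J : Finset ι, J.Nonempty → (∃ j, j ∉ J) →
      ∃ x : ι → ℝ, ∀ i ∈ J, ∀ j, j ∉ J → T x i - x i < T x j - x j) :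
    ∃ C : ℝ, ∀ (y : ι → ℝ) (δ l : ℝ), 0 ≤ δ → (∀ i, T y i = y i + δ * y i + l) →
      ∀ i j, y i - y j ≤ C := by
  classical
  choose! X hX using H
  let K : ℝ := ∑ J : Finset ι, 2 * ‖X J‖
  have hK : ∀ J, 2 * ‖X J‖ ≤ K := fun J =>
    Finset.single_le_sum (f := fun J => 2 * ‖X J‖) (fun J _ => by positivity) (Finset.mem_univ J)
  refine ⟨Fintype.card ι * K, fun y δ l hδ hy i j => ?_⟩
  let S : ℕ → Finset ι := fun k => Finset.univ.filter (fun m => y i - k * K ≤ y m)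
  have hK0 : 0 ≤ K := Finset.sum_nonneg (fun J _ => by positivity)
  have hsub : ∀ k, S k ⊆ S (k + 1) := by
    intro k m hmem
    simp only [S, Finset.mem_filter, Finset.mem_univ, true_and] at hmem ⊢
    push_cast
    linarith
  have hi : ∀ k, i ∈ S k := by
    intro k
    simp only [S, Finset.mem_filter, Finset.mem_univ, true_and]
    have : 0 ≤ (k : ℝ) * K := by positivity
    linarith
  have hcard : ∀ k, (∀ m, m ∈ S k) ∨ k + 1 ≤ (S k).card := by
    intro k
    induction k with
    | zero => exact Or.inr (Finset.card_pos.2 ⟨i, hi 0⟩)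
    | succ k ih =>
      by_cases hall : ∀ m, m ∈ S k
      · exact Or.inl fun m => hsub k (hall m)
      · right
        have ih := ih.resolve_left hall
        push Not at hall
        obtain ⟨a, haS, b, hbS, hab⟩ := aux_gap T hm ha (S k) ⟨i, hi k⟩ hall (X (S k))
          (hX (S k) ⟨i, hi k⟩ hall) y δ l hδ hy
        have hab := hab.trans (hK _)
        have hb : b ∈ S (k + 1) := by
          simp only [S, Finset.mem_filter, Finset.mem_univ, true_and] at haS ⊢
          push_cast
          linarith
        have : S k ⊂ S (k + 1) := (Finset.ssubset_iff_of_subset (hsub k)).2 ⟨b, hb, hbS⟩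
        have := Finset.card_lt_card this
        omega
  have hj : j ∈ S (Fintype.card ι) := by
    rcases hcard (Fintype.card ι) with h | h
    · exact h j
    · have := Finset.card_le_univ (S (Fintype.card ι))
      omega
  simp only [S, Finset.mem_filter, Finset.mem_univ, true_and] at hj
  linarith

lemma aux_exists (T : (ι → ℝ) → (ι → ℝ)) (hm : ∀ x y, x ≤ y → T x ≤ T y)
    (ha : ∀ x (c : ℝ) i, T (fun k => x k + c) i = T x i + c)
    (C : ℝ) (hC : ∀ (y : ι → ℝ) (δ l : ℝ), 0 ≤ δ → (∀ i, T y i = y i + δ * y i + l) →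
      ∀ i j, y i - y j ≤ C) :
    ∃ (z : ι → ℝ) (l : ℝ), ∀ i, T z i = z i + l := by
  have hT := aux_nonexp T hm ha
  have hTc : Continuous T := (LipschitzWith.of_dist_le_mul (K := 1) (by simpa using hT)).continuous
  obtain ⟨i0⟩ := ‹Nonempty ι›
  have hd : ∀ k : ℕ, (0 : ℝ) < 1 / ((k : ℝ) + 1) := fun k => by positivity
  choose y hy using fun k : ℕ => aux_solve T hT (1 / ((k : ℝ) + 1)) (hd k) 0
  let z : ℕ → ι → ℝ := fun k i => y k i + (- y k i0)
  have hyC : ∀ k i j, y k i - y k j ≤ C := fun k =>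
    hC (y k) _ 0 (hd k).le (fun i => by have := hy k i; simp only [Pi.zero_apply] at this; linarith)
  have hz : ∀ k, z k ∈ Metric.closedBall (0 : ι → ℝ) C := by
    intro k
    have hC0 : 0 ≤ C := by simpa using hyC k i0 i0
    rw [mem_closedBall_zero_iff, pi_norm_le_iff_of_nonneg hC0]
    intro i
    rw [Real.norm_eq_abs, abs_le]
    have := hyC k i i0
    have := hyC k i0 i
    simp only [z]
    constructor <;> linarith
  obtain ⟨z0, -, φ, hφ, hlim⟩ := (isCompact_closedBall (0 : ι → ℝ) C).tendsto_subseq hz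
  have hlimT : Tendsto (fun k => T (z (φ k))) atTop (𝓝 (T z0)) := (hTc.tendsto z0).comp hlim
  have hlimd : Tendsto (fun k => 1 / (((φ k : ℕ) : ℝ) + 1)) atTop (𝓝 0) :=
    (tendsto_one_div_add_atTop_nhds_zero_nat (𝕜 := ℝ)).comp hφ.tendsto_atTop
  have hl : ∀ i, Tendsto (fun k => T (z (φ k)) i - z (φ k) i - 1 / (((φ k : ℕ) : ℝ) + 1) * z (φ k) i)
      atTop (𝓝 (T z0 i - z0 i - 0 * z0 i)) := by
    intro i
    have h1 := (tendsto_pi_nhds.1 hlimT) i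
    have h2 := (tendsto_pi_nhds.1 hlim) i
    exact (h1.sub h2).sub (hlimd.mul h2)
  have heq : ∀ k i, T (z k) i - z k i - 1 / ((k : ℝ) + 1) * z k i = 1 / ((k : ℝ) + 1) * y k i0 := by
    intro k i
    have h1 : T (z k) i = T (y k) i + (- y k i0) := ha _ _ _
    have h2 := hy k i
    simp only [Pi.zero_apply] at h2
    rw [h1]
    simp only [z]
    linarith
  refine ⟨z0, T z0 i0 - z0 i0, fun i => ?_⟩
  have h1 := hl i
  have h2 := hl i0
  simp only [heq] at h1 h2
  have := tendsto_nhds_unique h1 h2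
  linarith

lemma aux_forward (T : (ι → ℝ) → (ι → ℝ)) (hm : ∀ x y, x ≤ y → T x ≤ T y)
    (ha : ∀ x (c : ℝ) i, T (fun k => x k + c) i = T x i + c)
    (u : ι → ℝ) (l : ℝ) (hu : ∀ i, T u i = u i + l) (M : ℝ)
    (hM : ∀ y : ι → ℝ, (∀ i, T y i = y i + l) → ∀ i j, (y i - u i) - (y j - u j) ≤ M)
    (J : Finset ι) :
    ∃ x : ι → ℝ, ∀ i ∈ J, ∀ j, j ∉ J → T x i - x i < T x j - x j := by
  classical
  by_contra! hcon
  have hT := aux_nonexp T hm ha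
  have hTc : Continuous T := (LipschitzWith.of_dist_le_mul (K := 1) (by simpa using hT)).continuous
  have hd : ∀ k : ℕ, (0 : ℝ) < 1 / ((k : ℝ) + 1) := fun k => by positivity
  obtain ⟨R, hR⟩ : ∃ R, R = max M 0 + 1 := ⟨_, rfl⟩
  have hRM : M < R := by have := le_max_left M 0; linarith
  have hR0 : 0 < R := by have := le_max_right M 0; linarith
  let v : ι → ℝ := fun i => if i ∈ J then R else 0
  have hv0 : ∀ i, 0 ≤ v i := fun i => by simp only [v]; split_ifs <;> linarith
  have hvR : ∀ i, v i ≤ R := fun i => by simp only [v]; split_ifs <;> linarith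
  have hsol : ∀ k : ℕ, ∃ y, ∀ i, T y i - y i = 1 / ((k : ℝ) + 1) * (y i - u i - v i) + l := by
    intro k
    obtain ⟨y, hy⟩ := aux_solve T hT (1 / ((k : ℝ) + 1)) (hd k)
      (fun i => u i + v i - l * ((k : ℝ) + 1))
    refine ⟨y, fun i => ?_⟩
    rw [hy i]
    have : (k : ℝ) + 1 ≠ 0 := by positivity
    field_simp
    ring
  choose y hy using hsol
  have hlow : ∀ k i, u i ≤ y k i := by
    intro k
    obtain ⟨i, hi⟩ := Finite.exists_min (fun m => y k m - u m)
    have h2 : T u i + (y k i - u i) ≤ T (y k) i := by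
      rw [← ha]
      refine hm _ _ (fun m => ?_) i
      have := hi m
      show u m + (y k i - u i) ≤ y k m
      linarith
    rw [hu] at h2
    have h3 := hy k i
    have h4 : 0 ≤ y k i - u i - v i := by
      by_contra! h
      have := mul_neg_of_pos_of_neg (hd k) h
      linarith
    intro m
    have := hi m
    linarith [hv0 i]
  have hup : ∀ k i, y k i ≤ u i + R := by
    intro k
    obtain ⟨i, hi⟩ := Finite.exists_max (fun m => y k m - u m)
    have h2 : T (y k) i ≤ T u i + (y k i - u i) := by
      rw [← ha]
      refine hm _ _ (fun m => ?_) i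
      have := hi m
      show y k m ≤ u m + (y k i - u i)
      linarith
    rw [hu] at h2
    have h3 := hy k i
    have h4 : y k i - u i - v i ≤ 0 := by
      by_contra! h
      have := mul_pos (hd k) h
      linarith
    intro m
    have := hi m
    linarith [hvR i]
  have hmem : ∀ k, y k ∈ Set.Icc u (fun i => u i + R) := fun k => ⟨hlow k, hup k⟩
  obtain ⟨y0, -, φ, hφ, hlim⟩ := isCompact_Icc.tendsto_subseq hmem
  have hlimT : Tendsto (fun k => T (y (φ k))) atTop (𝓝 (T y0)) := (hTc.tendsto y0).comp hlim
  have hlimd : Tendsto (fun k => 1 / (((φ k : ℕ) : ℝ) + 1)) atTop (𝓝 0) :=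
    (tendsto_one_div_add_atTop_nhds_zero_nat (𝕜 := ℝ)).comp hφ.tendsto_atTop
  have hlimi : ∀ i, Tendsto (fun k => y (φ k) i) atTop (𝓝 (y0 i)) := tendsto_pi_nhds.1 hlim
  have hfix : ∀ i, T y0 i = y0 i + l := by
    intro i
    have h1 := ((tendsto_pi_nhds.1 hlimT) i).sub (hlimi i)
    have h2 : Tendsto (fun k => 1 / (((φ k : ℕ) : ℝ) + 1) * (y (φ k) i - u i - v i) + l) atTop
        (𝓝 (0 * (y0 i - u i - v i) + l)) :=
      (hlimd.mul (((hlimi i).sub_const _).sub_const _)).add_const _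
    simp only [hy] at h1
    have := tendsto_nhds_unique h1 h2
    linarith
  have hev : ∀ᶠ k in atTop, ∀ i j, (y (φ k) i - u i) - (y (φ k) j - u j) < R := by
    rw [eventually_all]
    intro i
    rw [eventually_all]
    intro j
    have h1 := ((hlimi i).sub_const (u i)).sub ((hlimi j).sub_const (u j))
    exact h1.eventually_lt_const ((hM y0 hfix i j).trans_lt hRM)
  obtain ⟨k, hk⟩ := hev.exists
  obtain ⟨i, hiJ, j, hjJ, hij⟩ := hcon (y (φ k))
  rw [hy, hy] at hij
  have h1 : v i = R := by simp [v, hiJ]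
  have h2 : v j = 0 := by simp [v, hjJ]
  rw [h1, h2] at hij
  have h3 := hk i j
  have h4 := le_of_mul_le_mul_left ((add_le_add_iff_right l).1 hij) (hd (φ k))
  linarith

end Additive

/-- For an order-preserving homogeneous map `f` on the open positive cone,
the set of positive eigenvectors is nonempty and bounded under Hilbert's metric iff for
every nonempty proper subset `J` of the indices there is a positive `x` with
`max_{j ∈ J} f(x)_j/x_j < min_{j ∈ Jᶜ} f(x)_j/x_j`. -/
theorem stmt0 (n : ℕ) (hn : 1 ≤ n) (f : (Fin n → ℝ) → (Fin n → ℝ))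
    (hpos : ∀ x : Fin n → ℝ, (∀ i, 0 < x i) → ∀ i, 0 < f x i)
    (hmono : ∀ x y : Fin n → ℝ, (∀ i, 0 < x i) → (∀ i, 0 < y i) → x ≤ y → f x ≤ f y)
    (hhom : ∀ c : ℝ, 0 < c → ∀ x : Fin n → ℝ, (∀ i, 0 < x i) → f (c • x) = c • f x) :
    (({x : Fin n → ℝ | (∀ i, 0 < x i) ∧ ∃ l : ℝ, 0 < l ∧ f x = l • x}).Nonempty ∧
      ∃ M : ℝ, ∀ x ∈ {x : Fin n → ℝ | (∀ i, 0 < x i) ∧ ∃ l : ℝ, 0 < l ∧ f x = l • x},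
        ∀ y ∈ {x : Fin n → ℝ | (∀ i, 0 < x i) ∧ ∃ l : ℝ, 0 < l ∧ f x = l • x},
          dH n x y ≤ M) ↔
    (∀ (J : Finset (Fin n)) (hJ : J.Nonempty) (hJc : Jᶜ.Nonempty),
      ∃ x : Fin n → ℝ, (∀ i, 0 < x i) ∧
        J.sup' hJ (fun j => f x j / x j) < Jᶜ.inf' hJc (fun j => f x j / x j)) := by
  classical
  haveI : Nonempty (Fin n) := ⟨⟨0, hn⟩⟩
  let T : (Fin n → ℝ) → (Fin n → ℝ) := fun x i => Real.log (f (fun k => Real.exp (x k)) i)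
  have hep : ∀ x : Fin n → ℝ, ∀ i, 0 < (fun k => Real.exp (x k)) i := fun x i => Real.exp_pos _
  have hm : ∀ x y, x ≤ y → T x ≤ T y := by
    intro x y hxy i
    exact Real.log_le_log (hpos _ (hep x) i)
      (hmono _ _ (hep x) (hep y) (fun k => Real.exp_le_exp.2 (hxy k)) i)
  have ha : ∀ x (c : ℝ) i, T (fun k => x k + c) i = T x i + c := by
    intro x c i
    have h1 : (fun k => Real.exp (x k + c)) = Real.exp c • (fun k => Real.exp (x k)) := by
      funext k
      simp [Real.exp_add, mul_comm]
    simp only [T]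
    rw [h1, hhom _ (Real.exp_pos c) _ (hep x), Pi.smul_apply, smul_eq_mul,
      Real.log_mul (Real.exp_pos c).ne' (hpos _ (hep x) i).ne', Real.log_exp, add_comm]
  -- exponentials of additive eigenvectors are eigenvectors
  have hexp : ∀ (y : Fin n → ℝ) (l : ℝ), (∀ i, T y i = y i + l) →
      f (fun k => Real.exp (y k)) = Real.exp l • (fun k => Real.exp (y k)) := by
    intro y l h
    funext i
    have := h i
    simp only [T] at this
    rw [← Real.exp_log (hpos _ (hep y) i), this, Real.exp_add, Pi.smul_apply, smul_eq_mul, mul_comm]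
  have hexplog : ∀ x : Fin n → ℝ, (∀ i, 0 < x i) → (fun k => Real.exp (Real.log (x k))) = x :=
    fun x hx => funext fun k => Real.exp_log (hx k)
  have hlog : ∀ (x : Fin n → ℝ) (l : ℝ), (∀ i, 0 < x i) → 0 < l → f x = l • x →
      ∀ i, T (fun k => Real.log (x k)) i = Real.log (x i) + Real.log l := by
    intro x l hx hl h i
    simp only [T]
    rw [hexplog x hx, h, Pi.smul_apply, smul_eq_mul, Real.log_mul hl.ne' (hx i).ne', add_comm]
  have hdH : ∀ x y : Fin n → ℝ, (∀ i, 0 < x i) → (∀ i, 0 < y i) → ∀ M, dH n x y ≤ M ↔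
      ∀ i j, (Real.log (x i) - Real.log (y i)) - (Real.log (x j) - Real.log (y j)) ≤ M := by
    intro x y hx hy M
    have hq : ∀ i, 0 < x i / y i := fun i => div_pos (hx i) (hy i)
    have hql : ∀ i, Real.log (x i / y i) = Real.log (x i) - Real.log (y i) := fun i =>
      Real.log_div (hx i).ne' (hy i).ne'
    obtain ⟨a, ha'⟩ := exists_eq_ciSup_of_finite (f := fun i => x i / y i)
    obtain ⟨b, hb'⟩ := exists_eq_ciInf_of_finite (f := fun i => x i / y i)
    unfold dH
    rw [← ha', ← hb', hql, hql]
    refine ⟨fun h i j => ?_, fun h => h a b⟩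
    have h1 : x i / y i ≤ x a / y a := by
      rw [ha']
      exact le_ciSup (f := fun i => x i / y i) (Set.finite_range _).bddAbove i
    have h2 : x b / y b ≤ x j / y j := by
      rw [hb']
      exact ciInf_le (f := fun i => x i / y i) (Set.finite_range _).bddBelow j
    have h3 := Real.log_le_log (hq i) h1
    have h4 := Real.log_le_log (hq b) h2
    rw [hql, hql] at h3 h4
    linarith
  have hquot : ∀ x : Fin n → ℝ, ∀ i, f (fun k => Real.exp (x k)) i / Real.exp (x i)
      = Real.exp (T x i - x i) := by
    intro x i
    simp only [T]
    rw [Real.exp_sub, Real.exp_log (hpos _ (hep x) i)]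
  constructor
  · rintro ⟨⟨w, hw, l, hl, hfw⟩, M, hM⟩ J hJ hJc
    obtain ⟨x, hx⟩ := aux_forward T hm ha (fun k => Real.log (w k)) (Real.log l)
      (hlog w l hw hl hfw) M (by
        intro y hy i j
        have h1 := hM (fun k => Real.exp (y k)) ⟨hep y, Real.exp (Real.log l), Real.exp_pos _,
          hexp y _ hy⟩ w ⟨hw, l, hl, hfw⟩
        rw [hdH _ _ (hep y) hw] at h1
        simpa using h1 i j) J
    refine ⟨fun k => Real.exp (x k), hep x, ?_⟩
    rw [Finset.sup'_lt_iff]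
    intro i hi
    rw [Finset.lt_inf'_iff]
    intro j hj
    rw [hquot, hquot]
    exact Real.exp_lt_exp.2 (hx i hi j (Finset.mem_compl.1 hj))
  · intro H
    obtain ⟨C, hC⟩ := aux_bdd T hm ha (by
      rintro J hJ ⟨j, hj⟩
      have hJc : Jᶜ.Nonempty := ⟨j, Finset.mem_compl.2 hj⟩
      obtain ⟨x, hx, hlt⟩ := H J hJ hJc
      refine ⟨fun k => Real.log (x k), fun i hi j hj => ?_⟩
      rw [Finset.sup'_lt_iff] at hlt
      have h1 := hlt i hi
      rw [Finset.lt_inf'_iff] at h1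
      have h2 := h1 j (Finset.mem_compl.2 hj)
      have h3 := hquot (fun k => Real.log (x k)) i
      have h4 := hquot (fun k => Real.log (x k)) j
      rw [hexplog x hx, Real.exp_log (hx _)] at h3 h4
      rw [h3, h4] at h2
      exact Real.exp_lt_exp.1 h2)
    constructor
    · obtain ⟨z, l, hz⟩ := aux_exists T hm ha C hC
      exact ⟨fun k => Real.exp (z k), hep z, Real.exp l, Real.exp_pos _, hexp z l hz⟩
    · refine ⟨C + C, ?_⟩
      rintro x ⟨hx, l, hl, hfx⟩ y ⟨hy, l', hl', hfy⟩
      rw [hdH x y hx hy]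
      intro i j
      have h1 := hC (fun k => Real.log (x k)) 0 (Real.log l) le_rfl (fun i => by
        rw [hlog x l hx hl hfx]; ring) i j
      have h2 := hC (fun k => Real.log (y k)) 0 (Real.log l') le_rfl (fun i => by
        rw [hlog y l' hy hl' hfy]; ring) j i
      linarith
end

section
/- Let V be a finite-dimensional real normed vector space and h : V → V a nonexpansive map (‖h(x) − h(y)‖ ≤ ‖x − y‖ for all x, y). Then the fixed point set Fix(h) := {x ∈ V : h(x) = x} is nonempty and bounded if and only if there exist finitely many vectors w¹,…,wᵐ ∈ V such that the set {h(wⁱ) − wⁱ : i = 1,…,m} illuminates the closed unit ball of V, i.e., for every z ∈ V with ‖z‖ = 1 there exists i ∈ {1,…,m} and ε > 0 such that ‖z + λ(h(wⁱ) − wⁱ)‖ < 1 for all 0 < λ < ε. -/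
open Filter Topology in
theorem illum_mono {V : Type*} [NormedAddCommGroup V] [NormedSpace ℝ V] (q v : V) (a l : ℝ)
    (hq : ‖q + a • v‖ < ‖q‖) (hl : 0 < l) (hla : l ≤ a) : ‖q + l • v‖ < ‖q‖ := by
  have ha : 0 < a := lt_of_lt_of_le hl hla
  have h1 : a • (q + l • v) = (a - l) • q + l • (q + a • v) := by module
  have h2 : a * ‖q + l • v‖ ≤ (a - l) * ‖q‖ + l * ‖q + a • v‖ := by
    calc a * ‖q + l • v‖ = ‖a • (q + l • v)‖ := by
          rw [norm_smul, Real.norm_of_nonneg ha.le]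
      _ ≤ ‖(a - l) • q‖ + ‖l • (q + a • v)‖ := by rw [h1]; exact norm_add_le _ _
      _ = _ := by
          rw [norm_smul, norm_smul, Real.norm_of_nonneg hl.le,
            Real.norm_of_nonneg (sub_nonneg.2 hla)]
  have h3 : l * ‖q + a • v‖ < l * ‖q‖ := mul_lt_mul_of_pos_left hq hl
  have h4 : a * ‖q + l • v‖ < a * ‖q‖ := by nlinarith
  exact lt_of_mul_lt_mul_left h4 ha.le

theorem resolvent_exists {V : Type*} [NormedAddCommGroup V] [NormedSpace ℝ V]
    [FiniteDimensional ℝ V] (h : V → V) (hne : ∀ x y : V, ‖h x - h y‖ ≤ ‖x - y‖)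
    (y : V) (s : ℝ) (hs0 : 0 < s) (hs1 : s < 1) :
    ∃ x : V, x = (1 - s) • h x + s • y := by
  haveI : CompleteSpace V := FiniteDimensional.complete ℝ V
  have hc : ContractingWith (Real.toNNReal (1 - s)) (fun x => (1 - s) • h x + s • y) := by
    refine ⟨?_, ?_⟩
    · rw [← Real.toNNReal_one]
      exact (Real.toNNReal_lt_toNNReal_iff one_pos).2 (by linarith)
    · apply LipschitzWith.of_dist_le_mul
      intro a b
      rw [Real.coe_toNNReal _ (by linarith), dist_eq_norm, dist_eq_norm]
      have : (1 - s) • h a + s • y - ((1 - s) • h b + s • y) = (1 - s) • (h a - h b) := by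
        module
      rw [this, norm_smul, Real.norm_of_nonneg (by linarith)]
      exact mul_le_mul_of_nonneg_left (hne a b) (by linarith)
  exact ⟨_, (ContractingWith.fixedPoint_isFixedPt hc).symm⟩

theorem fix_of_resolvent {V : Type*} [NormedAddCommGroup V] [NormedSpace ℝ V]
    [FiniteDimensional ℝ V] (h : V → V) (hne : ∀ x y : V, ‖h x - h y‖ ≤ ‖x - y‖)
    (y : V) (K : Set V) (hK : IsCompact K)
    (hres : ∀ s : ℝ, 0 < s → s < 1 → ∀ x : V, x = (1 - s) • h x + s • y → x ∈ K) :
    ∃ x ∈ K, h x = x := by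
  have hcont : Continuous h := by
    have : LipschitzWith 1 h := LipschitzWith.of_dist_le_mul (by
      intro a b
      simpa [dist_eq_norm] using hne a b)
    exact this.continuous
  have hKne : K.Nonempty := by
    obtain ⟨x, hx⟩ := resolvent_exists h hne y (1/2) (by norm_num) (by norm_num)
    exact ⟨x, hres _ (by norm_num) (by norm_num) x hx⟩
  obtain ⟨x, hxK, hx⟩ := hK.exists_isMinOn hKne
    (f := fun x => ‖h x - x‖) (by fun_prop)
  obtain ⟨x', hx'K, hx'⟩ := hK.exists_isMaxOn hKne
    (f := fun x => ‖h x - y‖) (by fun_prop)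
  refine ⟨x, hxK, ?_⟩
  rw [isMinOn_iff] at hx
  rw [isMaxOn_iff] at hx'
  set C := ‖h x' - y‖ with hC
  have hC0 : 0 ≤ C := norm_nonneg _
  have key : ∀ s : ℝ, 0 < s → s < 1 → ‖h x - x‖ ≤ s * C := by
    intro s h0 h1
    obtain ⟨a, ha⟩ := resolvent_exists h hne y s h0 h1
    have haK := hres s h0 h1 a ha
    have h2 : h a - a = s • (h a - y) := by
      conv_lhs => rw [sub_eq_add_neg]; arg 2; rw [ha]
      module
    calc ‖h x - x‖ ≤ ‖h a - a‖ := hx a haK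
      _ = s * ‖h a - y‖ := by rw [h2, norm_smul, Real.norm_of_nonneg h0.le]
      _ ≤ s * C := mul_le_mul_of_nonneg_left (hx' a haK) h0.le
  by_contra hcon
  have hd : 0 < ‖h x - x‖ := norm_pos_iff.2 (sub_ne_zero.2 hcon)
  set d := ‖h x - x‖ with hdd
  have h3 := key (d / (d + C + 1)) (by positivity) (by rw [div_lt_one (by positivity)]; linarith)
  rw [div_mul_eq_mul_div, le_div_iff₀ (by positivity)] at h3
  nlinarith

open Filter Topology in
theorem bound_of_illum {V : Type*} [NormedAddCommGroup V] [NormedSpace ℝ V]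
    [FiniteDimensional ℝ V] (h : V → V) (hne : ∀ x y : V, ‖h x - h y‖ ≤ ‖x - y‖)
    (hi : ∀ z : V, ‖z‖ = 1 → ∃ w : V, ∃ a : ℝ, 0 < a ∧ ‖z + a • (h w - w)‖ < 1) :
    ∃ R : ℝ, ∀ x : V, ∀ c : ℝ, 0 ≤ c → h x = (1 + c) • x → ‖x‖ ≤ R := by
  haveI : ProperSpace V := FiniteDimensional.proper ℝ V
  by_contra hcon
  push Not at hcon
  choose x c hc hx hn using fun n : ℕ => hcon ((n : ℝ) + 1)
  have hpos : ∀ n, 0 < ‖x n‖ := fun n => lt_trans (by positivity) (hn n)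
  have hu : ∀ n, ‖x n‖⁻¹ • x n ∈ Metric.sphere (0 : V) 1 := by
    intro n
    rw [mem_sphere_zero_iff_norm, norm_smul, norm_inv, norm_norm, inv_mul_cancel₀ (hpos n).ne']
  obtain ⟨z, hz, φ, hφ, hlim⟩ := (isCompact_sphere (0 : V) 1).tendsto_subseq hu
  have hz1 : ‖z‖ = 1 := by simpa using hz
  obtain ⟨w, a, ha, hw⟩ := hi z hz1
  have ht : Tendsto (fun n => ‖x (φ n)‖) atTop atTop := by
    have h1 : Tendsto (fun n => ‖x n‖) atTop atTop := by
      apply tendsto_atTop_mono (fun n => ?_) tendsto_natCast_atTop_atTop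
      linarith [hn n]
    exact h1.comp hφ.tendsto_atTop
  have hinv := tendsto_inv_atTop_zero.comp ht
  have hq : Tendsto (fun n => ‖x (φ n)‖⁻¹ • x (φ n) - ‖x (φ n)‖⁻¹ • h w) atTop (𝓝 z) := by
    have := hlim.sub (hinv.smul_const (h w))
    simpa using this
  have e1 : ∀ᶠ n in atTop, ‖(‖x (φ n)‖⁻¹ • x (φ n) - ‖x (φ n)‖⁻¹ • h w) + a • (h w - w)‖ <
      ‖‖x (φ n)‖⁻¹ • x (φ n) - ‖x (φ n)‖⁻¹ • h w‖ := by
    apply Tendsto.eventually_lt (hq.add_const _).norm hq.norm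
    rwa [hz1]
  obtain ⟨n, h1, h2, h3⟩ := (e1.and ((ht.eventually_ge_atTop a⁻¹).and
    (ht.eventually_ge_atTop (2 * ‖h w‖)))).exists
  have hp := hpos (φ n)
  have h4 := illum_mono _ _ a (‖x (φ n)‖⁻¹) h1 (inv_pos.2 hp) (inv_le_of_inv_le₀ ha h2)
  have h5 : ‖x (φ n)‖⁻¹ • x (φ n) - ‖x (φ n)‖⁻¹ • h w + ‖x (φ n)‖⁻¹ • (h w - w)
      = ‖x (φ n)‖⁻¹ • (x (φ n) - w) := by module
  rw [h5, ← smul_sub, norm_smul, norm_smul] at h4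
  have h6 : ‖x (φ n) - w‖ < ‖x (φ n) - h w‖ := lt_of_mul_lt_mul_left h4 (norm_nonneg _)
  have h7 := hne (x (φ n)) w
  rw [hx] at h7
  have hc' := hc (φ n)
  generalize x (φ n) = X at *
  generalize c (φ n) = C at *
  have h8 : (1 + C) • (X - h w) = ((1 + C) • X - h w) - C • h w := by module
  have h9 : (1 + C) * ‖X - h w‖ ≤ ‖(1 + C) • X - h w‖ + C * ‖h w‖ := by
    calc (1 + C) * ‖X - h w‖ = ‖(1 + C) • (X - h w)‖ := by
          rw [norm_smul, Real.norm_of_nonneg (by linarith)]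
      _ ≤ _ := by
          rw [h8]; refine (norm_sub_le _ _).trans ?_
          rw [norm_smul C, Real.norm_of_nonneg hc']
  have h10 : ‖X‖ - ‖h w‖ ≤ ‖X - h w‖ := norm_sub_norm_le _ _
  have h11 : C * ‖h w‖ ≤ C * ‖X - h w‖ := mul_le_mul_of_nonneg_left (by linarith) hc'
  nlinarith

theorem illum_pt {V : Type*} [NormedAddCommGroup V] [NormedSpace ℝ V]
    [FiniteDimensional ℝ V] (h : V → V) (hne : ∀ x y : V, ‖h x - h y‖ ≤ ‖x - y‖)
    (x0 : V) (hx0 : h x0 = x0) (hb : Bornology.IsBounded {x : V | h x = x})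
    (z : V) :
    ∃ w : V, ∃ a : ℝ, 0 < a ∧ ‖z + a • (h w - w)‖ < 1 := by
  haveI : ProperSpace V := FiniteDimensional.proper ℝ V
  by_contra! hcon
  obtain ⟨R, hR⟩ := hb.exists_norm_le
  set M := |R| + 1 with hM
  have hM0 : 0 < M := by positivity
  obtain ⟨x, hxK, hx⟩ := fix_of_resolvent h hne (M • z)
    (Metric.closedBall x0 ‖M • z - x0‖ ∩ {x | M ≤ ‖x‖})
    ((isCompact_closedBall _ _).inter_right (isClosed_le continuous_const continuous_norm)) (by
      intro s h0 h1 x hx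
      constructor
      · rw [mem_closedBall_iff_norm]
        have e : x - x0 = (1 - s) • (h x - h x0) + s • (M • z - x0) := by
          conv_lhs => rw [hx]
          rw [hx0]; module
        have e2 : ‖x - x0‖ ≤ (1 - s) * ‖x - x0‖ + s * ‖M • z - x0‖ := by
          conv_lhs => rw [e]
          refine (norm_add_le _ _).trans ?_
          rw [norm_smul, norm_smul, Real.norm_of_nonneg h0.le, Real.norm_of_nonneg (by linarith)]
          have := mul_le_mul_of_nonneg_left (hne x x0) (by linarith : 0 ≤ 1 - s)
          linarith
        have e3 : s * ‖x - x0‖ ≤ s * ‖M • z - x0‖ := by linarith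
        exact le_of_mul_le_mul_left e3 h0
      · show M ≤ ‖x‖
        have e : s • (x - M • z) = (1 - s) • (h x - x) := by
          have : (1 - s) • h x = x - s • (M • z) := by
            conv_rhs => arg 1; rw [hx]
            module
          rw [smul_sub (1 - s), this]; module
        have h1s : 0 < 1 - s := by linarith
        have e2 := hcon x (M⁻¹ * (s⁻¹ * (1 - s))) (by positivity)
        have e3 : z + (M⁻¹ * (s⁻¹ * (1 - s))) • (h x - x) = M⁻¹ • x := by
          rw [mul_smul, mul_smul, ← e, inv_smul_smul₀ h0.ne', smul_sub, inv_smul_smul₀ hM0.ne']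
          abel
        rw [e3, norm_smul, Real.norm_of_nonneg (by positivity), inv_mul_eq_div,
          le_div_iff₀ hM0] at e2
        linarith)
  have h1 := hR x hx
  have h2 : M ≤ ‖x‖ := hxK.2
  have := le_abs_self R
  linarith

/-- For a nonexpansive map `h` on a finite-dimensional real normed space,
`Fix(h)` is nonempty and bounded iff finitely many vectors `wⁱ` exist such that
`{h(wⁱ) - wⁱ}` illuminates the closed unit ball. -/
theorem stmt1 (V : Type*) [NormedAddCommGroup V] [NormedSpace ℝ V] [FiniteDimensional ℝ V]
    (h : V → V) (hne : ∀ x y : V, ‖h x - h y‖ ≤ ‖x - y‖) :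
    (({x : V | h x = x}).Nonempty ∧ Bornology.IsBounded {x : V | h x = x}) ↔
    (∃ (m : ℕ) (w : Fin m → V), ∀ z : V, ‖z‖ = 1 →
      ∃ i : Fin m, ∃ ε > 0, ∀ l : ℝ, 0 < l → l < ε → ‖z + l • (h (w i) - w i)‖ < 1) := by
  haveI : ProperSpace V := FiniteDimensional.proper ℝ V
  constructor
  · rintro ⟨⟨x0, hx0⟩, hb⟩
    choose w a ha hw using illum_pt h hne x0 hx0 hb
    obtain ⟨t, ht⟩ := (isCompact_sphere (0 : V) 1).elim_finite_subcover
      (fun z : V => {y : V | ‖y + a z • (h (w z) - w z)‖ < 1})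
      (fun z => isOpen_lt (by fun_prop) continuous_const)
      (fun z _ => Set.mem_iUnion.2 ⟨z, hw z⟩)
    refine ⟨t.card, fun i => w (t.equivFin.symm i), fun z hz => ?_⟩
    have hz' := ht (mem_sphere_zero_iff_norm.2 hz)
    simp only [Set.mem_iUnion] at hz'
    obtain ⟨p, hp, hzp⟩ := hz'
    refine ⟨t.equivFin ⟨p, hp⟩, a p, ha p, fun l hl hla => ?_⟩
    simp only [Equiv.symm_apply_apply]
    have := illum_mono z (h (w p) - w p) (a p) l (by rw [hz]; exact hzp) hl hla.le
    rwa [hz] at this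
  · rintro ⟨m, w, hw⟩
    obtain ⟨R, hR⟩ := bound_of_illum h hne (by
      intro z hz
      obtain ⟨i, ε, hε, hi⟩ := hw z hz
      exact ⟨w i, ε / 2, by positivity, hi _ (by positivity) (by linarith)⟩)
    constructor
    · obtain ⟨x, -, hx⟩ := fix_of_resolvent h hne 0 (Metric.closedBall 0 R)
        (isCompact_closedBall _ _) (by
          intro s h0 h1 x hx
          rw [mem_closedBall_zero_iff]
          have h1s : 0 < 1 - s := by linarith
          refine hR x (s / (1 - s)) (by positivity) ?_
          have e : 1 + s / (1 - s) = (1 - s)⁻¹ := by field_simp; ring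
          rw [e]
          conv_rhs => rw [hx]
          rw [smul_zero, add_zero, inv_smul_smul₀ h1s.ne'])
      exact ⟨x, hx⟩
    · apply (Metric.isBounded_closedBall (x := (0 : V)) (r := R)).subset
      intro x hx
      rw [mem_closedBall_zero_iff]
      refine hR x 0 le_rfl ?_
      rw [add_zero, one_smul]; exact hx
end
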